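/- Assume Mr ≠ e² at every point of U. Then the conformal 2-forms of the RNdS spacetime are recurrent: there exists a 1-form σ on U (i.e., smooth functions σ₁, σ₂, σ₃, σ₄ on U) such that for all a,b,c,d,e' ∈ {1,2,3,4}, (∇_a C)_{bcde'} + (∇_b C)_{cade'} + (∇_c C)_{abde'} = σ_a C_{bcde'} + σ_b C_{cade'} + σ_c C_{abde'} at every point of U. -/

import Mathlib

noncomputable section

open Real

/-- The metric function f(r) = 1 - 2M/r + e²/r² - Λr² of the RNdS metric. -/
def fRN (M e Λ r : ℝ) : ℝ := 1 - 2*M/r + e^2/r^2 - Λ*r^2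

/-- The coordinate domain condition: r > 0, 0 < θ < π, f(r) ≠ 0.
Coordinates: p 0 = t, p 1 = r, p 2 = θ, p 3 = φ. -/
def RNdSDomain (M e Λ : ℝ) : Set (Fin 4 → ℝ) :=
  {p | 0 < p 1 ∧ 0 < p 2 ∧ p 2 < Real.pi ∧ fRN M e Λ (p 1) ≠ 0}

/-- Partial derivative of a scalar function on ℝ⁴ in the i-th coordinate direction. -/
def pd (i : Fin 4) (F : (Fin 4 → ℝ) → ℝ) (p : Fin 4 → ℝ) : ℝ :=
  fderiv ℝ F p (Pi.single i 1)

/-- The Reissner–Nordström–de Sitter metric components g_{ij}. -/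
def gMet (M e Λ : ℝ) (p : Fin 4 → ℝ) (i j : Fin 4) : ℝ :=
  if i = j then
    if i = 0 then -(fRN M e Λ (p 1))
    else if i = 1 then (fRN M e Λ (p 1))⁻¹
    else if i = 2 then (p 1)^2
    else (p 1)^2 * (Real.sin (p 2))^2
  else 0

/-- The pointwise inverse metric g^{ij} (diagonal). -/
def gInv (M e Λ : ℝ) (p : Fin 4 → ℝ) (i j : Fin 4) : ℝ :=
  if i = j then (gMet M e Λ p i i)⁻¹ else 0

/-- Christoffel symbols of the second kind Γ^k_{ij}. -/
def Chr (M e Λ : ℝ) (k i j : Fin 4) (p : Fin 4 → ℝ) : ℝ :=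
  (1/2) * ∑ l, gInv M e Λ p k l *
    (pd i (fun q => gMet M e Λ q j l) p + pd j (fun q => gMet M e Λ q i l) p
      - pd l (fun q => gMet M e Λ q i j) p)

/-- The (0,4) Riemann curvature tensor R_{hijk}. -/
def Riem (M e Λ : ℝ) (p : Fin 4 → ℝ) (h i j k : Fin 4) : ℝ :=
  ∑ α, gMet M e Λ p h α *
    (pd k (Chr M e Λ α i j) p - pd j (Chr M e Λ α i k) p
      + ∑ β, (Chr M e Λ β i j p * Chr M e Λ α β k p - Chr M e Λ β i k p * Chr M e Λ α β j p))

/-- The Ricci tensor Ric_{ij} = g^{hk} R_{hijk}. -/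
def RicT (M e Λ : ℝ) (p : Fin 4 → ℝ) (i j : Fin 4) : ℝ :=
  ∑ h, ∑ k, gInv M e Λ p h k * Riem M e Λ p h i j k

/-- The scalar curvature κ = g^{ij} Ric_{ij}. -/
def scalC (M e Λ : ℝ) (p : Fin 4 → ℝ) : ℝ :=
  ∑ i, ∑ j, gInv M e Λ p i j * RicT M e Λ p i j

/-- Kulkarni–Nomizu product of two (0,2) tensors. -/
def KN (A B : (Fin 4 → ℝ) → Fin 4 → Fin 4 → ℝ) (p : Fin 4 → ℝ) (i j k l : Fin 4) : ℝ :=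
  A p i l * B p j k + A p j k * B p i l - A p i k * B p j l - A p j l * B p i k

/-- The conformal curvature tensor C = R - (1/2)(g ∧ Ric) + (κ/12)(g ∧ g). -/
def confC (M e Λ : ℝ) (p : Fin 4 → ℝ) (h i j k : Fin 4) : ℝ :=
  Riem M e Λ p h i j k - (1/2) * KN (gMet M e Λ) (RicT M e Λ) p h i j k
    + (scalC M e Λ p / 12) * KN (gMet M e Λ) (gMet M e Λ) p h i j k

/-- The conharmonic curvature tensor K = R - (1/2)(g ∧ Ric). -/
def conhK (M e Λ : ℝ) (p : Fin 4 → ℝ) (h i j k : Fin 4) : ℝ :=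
  Riem M e Λ p h i j k - (1/2) * KN (gMet M e Λ) (RicT M e Λ) p h i j k

/-- The concircular curvature tensor W = R - (κ/24)(g ∧ g). -/
def concW (M e Λ : ℝ) (p : Fin 4 → ℝ) (h i j k : Fin 4) : ℝ :=
  Riem M e Λ p h i j k - (scalC M e Λ p / 24) * KN (gMet M e Λ) (gMet M e Λ) p h i j k

/-- The projective curvature tensor P_{hijk} = R_{hijk} - (1/3)(g_{hk}Ric_{ij} - g_{ik}Ric_{hj}). -/
def projP (M e Λ : ℝ) (p : Fin 4 → ℝ) (h i j k : Fin 4) : ℝ :=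
  Riem M e Λ p h i j k
    - (1/3) * (gMet M e Λ p h k * RicT M e Λ p i j - gMet M e Λ p i k * RicT M e Λ p h j)

/-- Index raised (0,4) tensor: B^α_{ijk} = g^{αh} B_{hijk}. -/
def upIdx (M e Λ : ℝ) (B : (Fin 4 → ℝ) → Fin 4 → Fin 4 → Fin 4 → Fin 4 → ℝ)
    (p : Fin 4 → ℝ) (α i j k : Fin 4) : ℝ :=
  ∑ h, gInv M e Λ p α h * B p h i j k

/-- The (0,6) tensor B·Y for a (0,4) tensor Y. -/
def dot4 (M e Λ : ℝ) (B Y : (Fin 4 → ℝ) → Fin 4 → Fin 4 → Fin 4 → Fin 4 → ℝ)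
    (p : Fin 4 → ℝ) (a b c d w s : Fin 4) : ℝ :=
  -(∑ α, upIdx M e Λ B p α a w s * Y p α b c d)
  - (∑ α, upIdx M e Λ B p α b w s * Y p a α c d)
  - (∑ α, upIdx M e Λ B p α c w s * Y p a b α d)
  - (∑ α, upIdx M e Λ B p α d w s * Y p a b c α)

/-- The (0,4) tensor B·Y for a (0,2) tensor Y. -/
def dot2 (M e Λ : ℝ) (B : (Fin 4 → ℝ) → Fin 4 → Fin 4 → Fin 4 → Fin 4 → ℝ)
    (Y : (Fin 4 → ℝ) → Fin 4 → Fin 4 → ℝ)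
    (p : Fin 4 → ℝ) (a b w s : Fin 4) : ℝ :=
  -(∑ α, upIdx M e Λ B p α a w s * Y p α b)
  - (∑ α, upIdx M e Λ B p α b w s * Y p a α)

/-- The Tachibana tensor Q(A,Y) for a (0,4) tensor Y. -/
def tach4 (A : (Fin 4 → ℝ) → Fin 4 → Fin 4 → ℝ)
    (Y : (Fin 4 → ℝ) → Fin 4 → Fin 4 → Fin 4 → Fin 4 → ℝ)
    (p : Fin 4 → ℝ) (a b c d w s : Fin 4) : ℝ :=
  (A p s a * Y p w b c d - A p w a * Y p s b c d)
  + (A p s b * Y p a w c d - A p w b * Y p a s c d)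
  + (A p s c * Y p a b w d - A p w c * Y p a b s d)
  + (A p s d * Y p a b c w - A p w d * Y p a b c s)

/-- The Tachibana tensor Q(A,Y) for a (0,2) tensor Y. -/
def tach2 (A Y : (Fin 4 → ℝ) → Fin 4 → Fin 4 → ℝ)
    (p : Fin 4 → ℝ) (a b w s : Fin 4) : ℝ :=
  (A p s a * Y p w b - A p w a * Y p s b)
  + (A p s b * Y p a w - A p w b * Y p a s)

/-- A symmetric (0,2) tensor A is B-compatible at p for a (0,4) tensor B. -/
def compatAt (M e Λ : ℝ) (A : (Fin 4 → ℝ) → Fin 4 → Fin 4 → ℝ)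
    (B : (Fin 4 → ℝ) → Fin 4 → Fin 4 → Fin 4 → Fin 4 → ℝ) (p : Fin 4 → ℝ) : Prop :=
  ∀ i j k l : Fin 4,
    ∑ α, ∑ β, gInv M e Λ p α β *
      (A p i α * B p β l j k + A p j α * B p β l k i + A p k α * B p β l i j) = 0

/-- Covariant derivative (∇_a B)_{hijk} of a (0,4) tensor. -/
def covD4 (M e Λ : ℝ) (B : (Fin 4 → ℝ) → Fin 4 → Fin 4 → Fin 4 → Fin 4 → ℝ)
    (a : Fin 4) (p : Fin 4 → ℝ) (h i j k : Fin 4) : ℝ :=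
  pd a (fun q => B q h i j k) p
  - (∑ β, Chr M e Λ β a h p * B p β i j k)
  - (∑ β, Chr M e Λ β a i p * B p h β j k)
  - (∑ β, Chr M e Λ β a j p * B p h i β k)
  - (∑ β, Chr M e Λ β a k p * B p h i j β)

/-- The energy–momentum tensor T = Ric - (κ/2) g + Λ g (units 8πG/c⁴ = 1). -/
def emT (M e Λ : ℝ) (p : Fin 4 → ℝ) (i j : Fin 4) : ℝ :=
  RicT M e Λ p i j - (scalC M e Λ p / 2) * gMet M e Λ p i j + Λ * gMet M e Λ p i j

end


section Helpers

open Real Filter Topology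

/-- first derivative of f -/
noncomputable def fD1 (M e Λ r : ℝ) : ℝ := 2*M/r^2 - 2*e^2/r^3 - 2*Λ*r

/-- second derivative of f -/
noncomputable def fD2 (M e Λ r : ℝ) : ℝ := -4*M/r^3 + 6*e^2/r^4 - 2*Λ

lemma hasDerivAt_fRN (M e Λ r : ℝ) (hr : r ≠ 0) :
    HasDerivAt (fRN M e Λ) (fD1 M e Λ r) r := by
  have h1 : HasDerivAt (fun x : ℝ => x) 1 r := hasDerivAt_id r
  have h2 := (((((hasDerivAt_const r (1:ℝ)).sub ((hasDerivAt_const r (2*M)).div h1 hr)).add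
    ((hasDerivAt_const r (e^2)).div (h1.pow 2) (pow_ne_zero 2 hr))).sub
    ((h1.pow 2).const_mul Λ)))
  refine HasDerivAt.congr_deriv h2 ?_
  simp only [fD1, Pi.pow_apply]
  field_simp
  push_cast
  ring

lemma hasDerivAt_fD1 (M e Λ r : ℝ) (hr : r ≠ 0) :
    HasDerivAt (fD1 M e Λ) (fD2 M e Λ r) r := by
  have h1 : HasDerivAt (fun x : ℝ => x) 1 r := hasDerivAt_id r
  have h2 := ((((hasDerivAt_const r (2*M)).div (h1.pow 2) (pow_ne_zero 2 hr)).sub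
    ((hasDerivAt_const r (2*e^2)).div (h1.pow 3) (pow_ne_zero 3 hr))).sub
    (h1.const_mul (2*Λ)))
  refine HasDerivAt.congr_deriv h2 ?_
  simp only [fD2, Pi.pow_apply]
  field_simp
  push_cast
  ring

lemma pd_prod (i : Fin 4) (F : (Fin 4 → ℝ) → ℝ) (p : Fin 4 → ℝ) (u v : ℝ → ℝ) (u' v' : ℝ)
    (hF : F =ᶠ[𝓝 p] fun q => u (q 1) * v (q 2))
    (hu : HasDerivAt u u' (p 1)) (hv : HasDerivAt v v' (p 2)) :
    pd i F p = if i = 1 then u' * v (p 2) else if i = 2 then u (p 1) * v' else 0 := by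
  have e1 : HasFDerivAt (fun q : Fin 4 → ℝ => q 1)
      (ContinuousLinearMap.proj (R := ℝ) (φ := fun _ : Fin 4 => ℝ) 1) p :=
    (ContinuousLinearMap.proj (R := ℝ) (φ := fun _ : Fin 4 => ℝ) 1).hasFDerivAt
  have e2 : HasFDerivAt (fun q : Fin 4 → ℝ => q 2)
      (ContinuousLinearMap.proj (R := ℝ) (φ := fun _ : Fin 4 => ℝ) 2) p :=
    (ContinuousLinearMap.proj (R := ℝ) (φ := fun _ : Fin 4 => ℝ) 2).hasFDerivAt
  have h1 := hu.comp_hasFDerivAt p e1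
  have h2 := hv.comp_hasFDerivAt p e2
  have h3 := h1.mul h2
  have h4 : fderiv ℝ F p = _ := hF.fderiv_eq.trans h3.fderiv
  rw [pd, h4]
  fin_cases i <;> simp [mul_comm]

lemma dom_open (M e Λ : ℝ) : ∀ p ∈ RNdSDomain M e Λ, ∀ᶠ q in 𝓝 p, q ∈ RNdSDomain M e Λ := by
  intro p hp
  obtain ⟨h1, h2, h3, h4⟩ := hp
  have c1 : ContinuousAt (fun q : Fin 4 → ℝ => q 1) p := (continuous_apply 1).continuousAt
  have c2 : ContinuousAt (fun q : Fin 4 → ℝ => q 2) p := (continuous_apply 2).continuousAt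
  have c3 : ContinuousAt (fun q : Fin 4 → ℝ => fRN M e Λ (q 1)) p :=
    ContinuousAt.comp (f := fun q : Fin 4 → ℝ => q 1) (g := fRN M e Λ)
      (hasDerivAt_fRN M e Λ (p 1) h1.ne').continuousAt c1
  filter_upwards [c1.eventually (lt_mem_nhds h1), c2.eventually (lt_mem_nhds h2),
    c2.eventually (gt_mem_nhds h3), c3.eventually_ne h4] with q a b c d
  exact ⟨a, b, c, d⟩

lemma sin_ne {M e Λ : ℝ} {p : Fin 4 → ℝ} (hp : p ∈ RNdSDomain M e Λ) : sin (p 2) ≠ 0 :=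
  (sin_pos_of_pos_of_lt_pi hp.2.1 hp.2.2.1).ne'

/-- radial factor of the metric -/
noncomputable def gU (M e Λ : ℝ) (i j : Fin 4) (r : ℝ) : ℝ := match i, j with
  | 0, 0 => -(fRN M e Λ r)
  | 1, 1 => (fRN M e Λ r)⁻¹
  | 2, 2 => r^2
  | 3, 3 => r^2
  | _, _ => 0

/-- derivative of the radial factor -/
noncomputable def gU' (M e Λ : ℝ) (i j : Fin 4) (r : ℝ) : ℝ := match i, j with
  | 0, 0 => -(fD1 M e Λ r)
  | 1, 1 => -(fD1 M e Λ r) / (fRN M e Λ r)^2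
  | 2, 2 => 2*r
  | 3, 3 => 2*r
  | _, _ => 0

/-- angular factor of the metric -/
noncomputable def gV (i j : Fin 4) (x : ℝ) : ℝ := match i, j with
  | 3, 3 => sin x ^ 2
  | _, _ => 1

/-- derivative of the angular factor -/
noncomputable def gV' (i j : Fin 4) (x : ℝ) : ℝ := match i, j with
  | 3, 3 => 2 * sin x * cos x
  | _, _ => 0

lemma gMet_eq (M e Λ : ℝ) (p : Fin 4 → ℝ) (i j : Fin 4) :
    gMet M e Λ p i j = gU M e Λ i j (p 1) * gV i j (p 2) := by
  fin_cases i <;> fin_cases j <;> simp [gMet, gU, gV]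

lemma gU_deriv (M e Λ r : ℝ) (hr : r ≠ 0) (hf : fRN M e Λ r ≠ 0) (i j : Fin 4) :
    HasDerivAt (gU M e Λ i j) (gU' M e Λ i j r) r := by
  have h0 := hasDerivAt_fRN M e Λ r hr
  have hz : HasDerivAt (fun _ : ℝ => (0:ℝ)) 0 r := hasDerivAt_const r 0
  have hs : HasDerivAt (fun x : ℝ => x^2) (2*r) r := by
    simpa using hasDerivAt_pow 2 r
  fin_cases i <;> fin_cases j <;> first
    | exact hz | exact hs | exact h0.neg | exact h0.inv hf

lemma sin_sq_deriv (x : ℝ) : HasDerivAt (fun x : ℝ => sin x ^ 2) (2 * sin x * cos x) x := by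
  refine ((hasDerivAt_sin x).pow 2).congr_deriv ?_
  simp

lemma gV_deriv (x : ℝ) (i j : Fin 4) : HasDerivAt (gV i j) (gV' i j x) x := by
  have h1 : HasDerivAt (fun _ : ℝ => (1:ℝ)) 0 x := hasDerivAt_const x 1
  fin_cases i <;> fin_cases j <;> first
    | exact h1 | exact sin_sq_deriv x

lemma pd_gMet {M e Λ : ℝ} {p : Fin 4 → ℝ} (hp : p ∈ RNdSDomain M e Λ) (a i j : Fin 4) :
    pd a (fun q => gMet M e Λ q i j) p =
      if a = 1 then gU' M e Λ i j (p 1) * gV i j (p 2) else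
      if a = 2 then gU M e Λ i j (p 1) * gV' i j (p 2) else 0 :=
  pd_prod a _ p (gU M e Λ i j) (gV i j) _ _
    (Eventually.of_forall fun q => gMet_eq M e Λ q i j)
    (gU_deriv M e Λ (p 1) hp.1.ne' hp.2.2.2 i j) (gV_deriv (p 2) i j)

/-- radial factor of the Christoffel symbols -/
noncomputable def cU (M e Λ : ℝ) (k i j : Fin 4) (r : ℝ) : ℝ := match k, i, j with
  | 0, 0, 1 => fD1 M e Λ r / (2 * fRN M e Λ r)
  | 0, 1, 0 => fD1 M e Λ r / (2 * fRN M e Λ r)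
  | 1, 0, 0 => fRN M e Λ r * fD1 M e Λ r / 2
  | 1, 1, 1 => -(fD1 M e Λ r / (2 * fRN M e Λ r))
  | 1, 2, 2 => -(r * fRN M e Λ r)
  | 1, 3, 3 => -(r * fRN M e Λ r)
  | 2, 1, 2 => r⁻¹
  | 2, 2, 1 => r⁻¹
  | 3, 1, 3 => r⁻¹
  | 3, 3, 1 => r⁻¹
  | 2, 3, 3 => -1
  | 3, 2, 3 => 1
  | 3, 3, 2 => 1
  | _, _, _ => 0

/-- its derivative -/
noncomputable def cU' (M e Λ : ℝ) (k i j : Fin 4) (r : ℝ) : ℝ := match k, i, j with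
  | 0, 0, 1 => (fD2 M e Λ r * fRN M e Λ r - fD1 M e Λ r ^ 2) / (2 * fRN M e Λ r ^ 2)
  | 0, 1, 0 => (fD2 M e Λ r * fRN M e Λ r - fD1 M e Λ r ^ 2) / (2 * fRN M e Λ r ^ 2)
  | 1, 0, 0 => (fD1 M e Λ r ^ 2 + fRN M e Λ r * fD2 M e Λ r) / 2
  | 1, 1, 1 => -((fD2 M e Λ r * fRN M e Λ r - fD1 M e Λ r ^ 2) / (2 * fRN M e Λ r ^ 2))
  | 1, 2, 2 => -(fRN M e Λ r + r * fD1 M e Λ r)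
  | 1, 3, 3 => -(fRN M e Λ r + r * fD1 M e Λ r)
  | 2, 1, 2 => -(r^2)⁻¹
  | 2, 2, 1 => -(r^2)⁻¹
  | 3, 1, 3 => -(r^2)⁻¹
  | 3, 3, 1 => -(r^2)⁻¹
  | _, _, _ => 0

/-- angular factor of the Christoffel symbols -/
noncomputable def cV (k i j : Fin 4) (x : ℝ) : ℝ := match k, i, j with
  | 1, 3, 3 => sin x ^ 2
  | 2, 3, 3 => sin x * cos x
  | 3, 2, 3 => cos x / sin x
  | 3, 3, 2 => cos x / sin x
  | _, _, _ => 1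

/-- its derivative -/
noncomputable def cV' (k i j : Fin 4) (x : ℝ) : ℝ := match k, i, j with
  | 1, 3, 3 => 2 * sin x * cos x
  | 2, 3, 3 => cos x ^ 2 - sin x ^ 2
  | 3, 2, 3 => -1 - cos x ^ 2 / sin x ^ 2
  | 3, 3, 2 => -1 - cos x ^ 2 / sin x ^ 2
  | _, _, _ => 0

lemma cU_deriv (M e Λ r : ℝ) (hr : r ≠ 0) (hf : fRN M e Λ r ≠ 0) (k i j : Fin 4) :
    HasDerivAt (cU M e Λ k i j) (cU' M e Λ k i j r) r := by
  have h0 := hasDerivAt_fRN M e Λ r hr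
  have h1 := hasDerivAt_fD1 M e Λ r hr
  have hz : HasDerivAt (fun _ : ℝ => (0:ℝ)) 0 r := hasDerivAt_const r 0
  have ho : HasDerivAt (fun _ : ℝ => (1:ℝ)) 0 r := hasDerivAt_const r 1
  have hm : HasDerivAt (fun _ : ℝ => (-1:ℝ)) 0 r := hasDerivAt_const r (-1)
  have hi : HasDerivAt (fun x : ℝ => x⁻¹) (-(r^2)⁻¹) r := hasDerivAt_inv hr
  have ha : HasDerivAt (fun x => fD1 M e Λ x / (2 * fRN M e Λ x))
      ((fD2 M e Λ r * fRN M e Λ r - fD1 M e Λ r ^ 2) / (2 * fRN M e Λ r ^ 2)) r := by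
    refine (h1.div (h0.const_mul 2) (mul_ne_zero two_ne_zero hf)).congr_deriv ?_
    field_simp
  have hb : HasDerivAt (fun x => fRN M e Λ x * fD1 M e Λ x / 2)
      ((fD1 M e Λ r ^ 2 + fRN M e Λ r * fD2 M e Λ r) / 2) r := by
    refine ((h0.mul h1).div_const 2).congr_deriv ?_
    ring
  have hc : HasDerivAt (fun x => -(x * fRN M e Λ x)) (-(fRN M e Λ r + r * fD1 M e Λ r)) r := by
    refine (((hasDerivAt_id r).mul h0).neg).congr_deriv ?_
    simp
  fin_cases k <;> fin_cases i <;> fin_cases j <;> first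
    | exact hz | exact ho | exact hm | exact hi | exact ha | exact hb | exact hc | exact ha.neg

lemma cV_deriv (x : ℝ) (hs : sin x ≠ 0) (k i j : Fin 4) :
    HasDerivAt (cV k i j) (cV' k i j x) x := by
  have ho : HasDerivAt (fun _ : ℝ => (1:ℝ)) 0 x := hasDerivAt_const x 1
  have ha : HasDerivAt (fun x : ℝ => sin x * cos x) (cos x ^ 2 - sin x ^ 2) x := by
    refine ((hasDerivAt_sin x).mul (hasDerivAt_cos x)).congr_deriv ?_
    ring
  have hb : HasDerivAt (fun x : ℝ => cos x / sin x) (-1 - cos x ^ 2 / sin x ^ 2) x := by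
    refine ((hasDerivAt_cos x).div (hasDerivAt_sin x) hs).congr_deriv ?_
    field_simp
    try ring
  fin_cases k <;> fin_cases i <;> fin_cases j <;> first
    | exact ho | exact sin_sq_deriv x | exact ha | exact hb

lemma Chr_eq {M e Λ : ℝ} {p : Fin 4 → ℝ} (hp : p ∈ RNdSDomain M e Λ) (k i j : Fin 4) :
    Chr M e Λ k i j p = cU M e Λ k i j (p 1) * cV k i j (p 2) := by
  have hr := hp.1.ne'
  have hf := hp.2.2.2
  have hs := sin_ne hp
  simp only [Chr, Fin.sum_univ_four, pd_gMet hp, gInv]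
  fin_cases k <;> fin_cases i <;> fin_cases j <;>
    simp [gMet_eq, gU, gU', gV, gV', cU, cV] <;> field_simp

lemma pd_Chr {M e Λ : ℝ} {p : Fin 4 → ℝ} (hp : p ∈ RNdSDomain M e Λ) (a k i j : Fin 4) :
    pd a (Chr M e Λ k i j) p =
      if a = 1 then cU' M e Λ k i j (p 1) * cV k i j (p 2) else
      if a = 2 then cU M e Λ k i j (p 1) * cV' k i j (p 2) else 0 :=
  pd_prod a _ p (cU M e Λ k i j) (cV k i j) _ _
    ((dom_open M e Λ p hp).mono fun _ hq => Chr_eq hq k i j)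
    (cU_deriv M e Λ (p 1) hp.1.ne' hp.2.2.2 k i j) (cV_deriv (p 2) (sin_ne hp) k i j)


lemma fin4_cases {P : Fin 4 → Prop} (h0 : P 0) (h1 : P 1) (h2 : P 2) (h3 : P 3) : ∀ i, P i := by
  intro i
  fin_cases i
  · exact h0
  · exact h1
  · exact h2
  · exact h3

lemma cU_zero (M e Λ r : ℝ) :
    (∀ k, cU M e Λ k 0 2 r = 0) ∧ (∀ k, cU M e Λ k 0 3 r = 0) ∧ (∀ k, cU M e Λ k 2 0 r = 0) ∧
    (∀ k, cU M e Λ k 3 0 r = 0) ∧ (∀ i, cU M e Λ 0 i 2 r = 0) ∧ (∀ i, cU M e Λ 0 i 3 r = 0) ∧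
    (∀ i, cU M e Λ 2 i 0 r = 0) ∧ (∀ i, cU M e Λ 3 i 0 r = 0) ∧ (cU M e Λ 0 0 0 r = 0) ∧
    (cU M e Λ 0 1 1 r = 0) ∧ (∀ j, cU M e Λ 0 2 j r = 0) ∧ (∀ j, cU M e Λ 0 3 j r = 0) ∧
    (cU M e Λ 1 0 1 r = 0) ∧ (cU M e Λ 1 1 0 r = 0) ∧ (cU M e Λ 1 1 2 r = 0) ∧
    (cU M e Λ 1 1 3 r = 0) ∧ (cU M e Λ 1 2 1 r = 0) ∧ (cU M e Λ 1 2 3 r = 0) ∧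
    (cU M e Λ 1 3 1 r = 0) ∧ (cU M e Λ 1 3 2 r = 0) ∧ (∀ j, cU M e Λ 2 0 j r = 0) ∧
    (cU M e Λ 2 1 1 r = 0) ∧ (cU M e Λ 2 1 3 r = 0) ∧ (cU M e Λ 2 2 2 r = 0) ∧
    (cU M e Λ 2 2 3 r = 0) ∧ (cU M e Λ 2 3 1 r = 0) ∧ (cU M e Λ 2 3 2 r = 0) ∧
    (∀ j, cU M e Λ 3 0 j r = 0) ∧ (cU M e Λ 3 1 1 r = 0) ∧ (cU M e Λ 3 1 2 r = 0) ∧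
    (cU M e Λ 3 2 1 r = 0) ∧ (cU M e Λ 3 2 2 r = 0) ∧ (cU M e Λ 3 3 3 r = 0) := by
  repeat' apply And.intro
  all_goals first
    | rfl
    | (refine fin4_cases ?_ ?_ ?_ ?_ <;> rfl)

lemma cU'_zero (M e Λ r : ℝ) :
    (∀ k, cU' M e Λ k 0 2 r = 0) ∧ (∀ k, cU' M e Λ k 0 3 r = 0) ∧ (∀ k, cU' M e Λ k 2 0 r = 0) ∧
    (∀ k, cU' M e Λ k 3 0 r = 0) ∧ (∀ i, cU' M e Λ 0 i 2 r = 0) ∧ (∀ i, cU' M e Λ 0 i 3 r = 0) ∧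
    (∀ i, cU' M e Λ 2 i 0 r = 0) ∧ (∀ i, cU' M e Λ 3 i 0 r = 0) ∧ (cU' M e Λ 0 0 0 r = 0) ∧
    (cU' M e Λ 0 1 1 r = 0) ∧ (∀ j, cU' M e Λ 0 2 j r = 0) ∧ (∀ j, cU' M e Λ 0 3 j r = 0) ∧
    (cU' M e Λ 1 0 1 r = 0) ∧ (cU' M e Λ 1 1 0 r = 0) ∧ (cU' M e Λ 1 1 2 r = 0) ∧
    (cU' M e Λ 1 1 3 r = 0) ∧ (cU' M e Λ 1 2 1 r = 0) ∧ (cU' M e Λ 1 2 3 r = 0) ∧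
    (cU' M e Λ 1 3 1 r = 0) ∧ (cU' M e Λ 1 3 2 r = 0) ∧ (∀ j, cU' M e Λ 2 0 j r = 0) ∧
    (cU' M e Λ 2 1 1 r = 0) ∧ (cU' M e Λ 2 1 3 r = 0) ∧ (cU' M e Λ 2 2 2 r = 0) ∧
    (cU' M e Λ 2 2 3 r = 0) ∧ (cU' M e Λ 2 3 1 r = 0) ∧ (cU' M e Λ 2 3 2 r = 0) ∧
    (∀ j, cU' M e Λ 3 0 j r = 0) ∧ (cU' M e Λ 3 1 1 r = 0) ∧ (cU' M e Λ 3 1 2 r = 0) ∧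
    (cU' M e Λ 3 2 1 r = 0) ∧ (cU' M e Λ 3 2 2 r = 0) ∧ (cU' M e Λ 3 3 3 r = 0) ∧
    (cU' M e Λ 2 3 3 r = 0) ∧ (cU' M e Λ 3 2 3 r = 0) ∧ (cU' M e Λ 3 3 2 r = 0) := by
  repeat' apply And.intro
  all_goals first
    | rfl
    | (refine fin4_cases ?_ ?_ ?_ ?_ <;> rfl)

lemma cU_val (M e Λ r : ℝ) :
    (cU M e Λ 0 0 1 r = fD1 M e Λ r / (2 * fRN M e Λ r)) ∧
    (cU M e Λ 0 1 0 r = fD1 M e Λ r / (2 * fRN M e Λ r)) ∧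
    (cU M e Λ 1 0 0 r = fRN M e Λ r * fD1 M e Λ r / 2) ∧
    (cU M e Λ 1 1 1 r = -(fD1 M e Λ r / (2 * fRN M e Λ r))) ∧
    (cU M e Λ 1 2 2 r = -(r * fRN M e Λ r)) ∧
    (cU M e Λ 1 3 3 r = -(r * fRN M e Λ r)) ∧
    (cU M e Λ 2 1 2 r = r⁻¹) ∧
    (cU M e Λ 2 2 1 r = r⁻¹) ∧
    (cU M e Λ 3 1 3 r = r⁻¹) ∧
    (cU M e Λ 3 3 1 r = r⁻¹) ∧
    (cU M e Λ 2 3 3 r = -1) ∧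
    (cU M e Λ 3 2 3 r = 1) ∧
    (cU M e Λ 3 3 2 r = 1) := by
  repeat' apply And.intro
  all_goals rfl

lemma cU'_val (M e Λ r : ℝ) :
    (cU' M e Λ 0 0 1 r = (fD2 M e Λ r * fRN M e Λ r - fD1 M e Λ r ^ 2) / (2 * fRN M e Λ r ^ 2)) ∧
    (cU' M e Λ 0 1 0 r = (fD2 M e Λ r * fRN M e Λ r - fD1 M e Λ r ^ 2) / (2 * fRN M e Λ r ^ 2)) ∧
    (cU' M e Λ 1 0 0 r = (fD1 M e Λ r ^ 2 + fRN M e Λ r * fD2 M e Λ r) / 2) ∧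
    (cU' M e Λ 1 1 1 r = -((fD2 M e Λ r * fRN M e Λ r - fD1 M e Λ r ^ 2) / (2 * fRN M e Λ r ^ 2))) ∧
    (cU' M e Λ 1 2 2 r = -(fRN M e Λ r + r * fD1 M e Λ r)) ∧
    (cU' M e Λ 1 3 3 r = -(fRN M e Λ r + r * fD1 M e Λ r)) ∧
    (cU' M e Λ 2 1 2 r = -(r^2)⁻¹) ∧
    (cU' M e Λ 2 2 1 r = -(r^2)⁻¹) ∧
    (cU' M e Λ 3 1 3 r = -(r^2)⁻¹) ∧
    (cU' M e Λ 3 3 1 r = -(r^2)⁻¹) := by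
  repeat' apply And.intro
  all_goals rfl

lemma cV_val (x : ℝ) :
    (cV 0 0 1 x = 1) ∧
    (cV 0 1 0 x = 1) ∧
    (cV 1 0 0 x = 1) ∧
    (cV 1 1 1 x = 1) ∧
    (cV 1 2 2 x = 1) ∧
    (cV 1 3 3 x = sin x ^ 2) ∧
    (cV 2 1 2 x = 1) ∧
    (cV 2 2 1 x = 1) ∧
    (cV 3 1 3 x = 1) ∧
    (cV 3 3 1 x = 1) ∧
    (cV 2 3 3 x = sin x * cos x) ∧
    (cV 3 2 3 x = cos x / sin x) ∧
    (cV 3 3 2 x = cos x / sin x) := by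
  repeat' apply And.intro
  all_goals rfl

lemma cV'_val (x : ℝ) :
    (cV' 0 0 1 x = 0) ∧
    (cV' 0 1 0 x = 0) ∧
    (cV' 1 0 0 x = 0) ∧
    (cV' 1 1 1 x = 0) ∧
    (cV' 1 2 2 x = 0) ∧
    (cV' 1 3 3 x = 2 * sin x * cos x) ∧
    (cV' 2 1 2 x = 0) ∧
    (cV' 2 2 1 x = 0) ∧
    (cV' 3 1 3 x = 0) ∧
    (cV' 3 3 1 x = 0) ∧
    (cV' 2 3 3 x = cos x ^ 2 - sin x ^ 2) ∧
    (cV' 3 2 3 x = -1 - cos x ^ 2 / sin x ^ 2) ∧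
    (cV' 3 3 2 x = -1 - cos x ^ 2 / sin x ^ 2) := by
  repeat' apply And.intro
  all_goals rfl

/-- nontrivial components R_{hiih} -/
noncomputable def RK (M e Λ : ℝ) (p : Fin 4 → ℝ) (h i : Fin 4) : ℝ := match h, i with
  | 0, 1 => fD2 M e Λ (p 1) / 2
  | 1, 0 => fD2 M e Λ (p 1) / 2
  | 0, 2 => fRN M e Λ (p 1) * fD1 M e Λ (p 1) * p 1 / 2
  | 2, 0 => fRN M e Λ (p 1) * fD1 M e Λ (p 1) * p 1 / 2
  | 0, 3 => fRN M e Λ (p 1) * fD1 M e Λ (p 1) * p 1 / 2 * sin (p 2) ^ 2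
  | 3, 0 => fRN M e Λ (p 1) * fD1 M e Λ (p 1) * p 1 / 2 * sin (p 2) ^ 2
  | 1, 2 => -(fD1 M e Λ (p 1) * p 1 / (2 * fRN M e Λ (p 1)))
  | 2, 1 => -(fD1 M e Λ (p 1) * p 1 / (2 * fRN M e Λ (p 1)))
  | 1, 3 => -(fD1 M e Λ (p 1) * p 1 / (2 * fRN M e Λ (p 1)) * sin (p 2) ^ 2)
  | 3, 1 => -(fD1 M e Λ (p 1) * p 1 / (2 * fRN M e Λ (p 1)) * sin (p 2) ^ 2)
  | 2, 3 => (1 - fRN M e Λ (p 1)) * p 1 ^ 2 * sin (p 2) ^ 2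
  | 3, 2 => (1 - fRN M e Λ (p 1)) * p 1 ^ 2 * sin (p 2) ^ 2
  | _, _ => 0

/-- the generic algebraic pattern -/
noncomputable def dl (h i j k : Fin 4) : ℝ :=
  (if h = k then if i = j then 1 else 0 else 0) - (if h = j then if i = k then 1 else 0 else 0)

lemma gUV_val (M e Λ : ℝ) (p : Fin 4 → ℝ) : gMet M e Λ p 0 0 = -(fRN M e Λ (p 1)) ∧
    gMet M e Λ p 1 1 = (fRN M e Λ (p 1))⁻¹ ∧ gMet M e Λ p 2 2 = p 1 ^ 2 ∧
    gMet M e Λ p 3 3 = p 1 ^ 2 * sin (p 2) ^ 2 := ⟨rfl, rfl, rfl, rfl⟩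

lemma RK_val (M e Λ : ℝ) (p : Fin 4 → ℝ) :
    (RK M e Λ p 0 1 = fD2 M e Λ (p 1) / 2) ∧
    (RK M e Λ p 1 0 = fD2 M e Λ (p 1) / 2) ∧
    (RK M e Λ p 0 2 = fRN M e Λ (p 1) * fD1 M e Λ (p 1) * p 1 / 2) ∧
    (RK M e Λ p 2 0 = fRN M e Λ (p 1) * fD1 M e Λ (p 1) * p 1 / 2) ∧
    (RK M e Λ p 0 3 = fRN M e Λ (p 1) * fD1 M e Λ (p 1) * p 1 / 2 * sin (p 2) ^ 2) ∧
    (RK M e Λ p 3 0 = fRN M e Λ (p 1) * fD1 M e Λ (p 1) * p 1 / 2 * sin (p 2) ^ 2) ∧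
    (RK M e Λ p 1 2 = -(fD1 M e Λ (p 1) * p 1 / (2 * fRN M e Λ (p 1)))) ∧
    (RK M e Λ p 2 1 = -(fD1 M e Λ (p 1) * p 1 / (2 * fRN M e Λ (p 1)))) ∧
    (RK M e Λ p 1 3 = -(fD1 M e Λ (p 1) * p 1 / (2 * fRN M e Λ (p 1)) * sin (p 2) ^ 2)) ∧
    (RK M e Λ p 3 1 = -(fD1 M e Λ (p 1) * p 1 / (2 * fRN M e Λ (p 1)) * sin (p 2) ^ 2)) ∧
    (RK M e Λ p 2 3 = (1 - fRN M e Λ (p 1)) * p 1 ^ 2 * sin (p 2) ^ 2) ∧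
    (RK M e Λ p 3 2 = (1 - fRN M e Λ (p 1)) * p 1 ^ 2 * sin (p 2) ^ 2) ∧
    (∀ i, RK M e Λ p i i = 0) := by
  refine ⟨rfl, rfl, rfl, rfl, rfl, rfl, rfl, rfl, rfl, rfl, rfl, rfl, fin4_cases rfl rfl rfl rfl⟩

lemma Riem_red (M e Λ : ℝ) (p : Fin 4 → ℝ) (h i j k : Fin 4) :
    Riem M e Λ p h i j k = gMet M e Λ p h h *
    (pd k (Chr M e Λ h i j) p - pd j (Chr M e Λ h i k) p
      + ∑ β, (Chr M e Λ β i j p * Chr M e Λ h β k p - Chr M e Λ β i k p * Chr M e Λ h β j p)) := by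
  unfold Riem
  apply Finset.sum_eq_single h
  · intro b _ hb
    simp [gMet, Ne.symm hb]
  · simp

set_option maxHeartbeats 4000000 in
lemma Riem_eq {M e Λ : ℝ} {p : Fin 4 → ℝ} (hp : p ∈ RNdSDomain M e Λ) (h i j k : Fin 4) :
    Riem M e Λ p h i j k = RK M e Λ p h i * dl h i j k := by
  have hr := hp.1.ne'
  have hf := hp.2.2.2
  have hs := sin_ne hp
  rw [Riem_red]
  simp only [pd_Chr hp, Chr_eq hp, Fin.sum_univ_four, dl]
  revert h i j k
  refine fin4_cases ?_ ?_ ?_ ?_ <;> refine fin4_cases ?_ ?_ ?_ ?_ <;>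
    refine fin4_cases ?_ ?_ ?_ ?_ <;> refine fin4_cases ?_ ?_ ?_ ?_ <;>
    simp only [cU_zero, cU'_zero, cU_val, cU'_val, cV_val, cV'_val, RK_val, gUV_val,
      Fin.reduceEq, if_true, if_false, zero_mul, mul_zero, sub_zero, add_zero, zero_add,
      zero_sub, sub_self, mul_one] <;>
    first
    | done
    | (field_simp; done)
    | (field_simp; ring1)

/-- eigenvalues of the Ricci tensor -/
noncomputable def rho (M e Λ : ℝ) (p : Fin 4 → ℝ) (i : Fin 4) : ℝ :=
  if i = 0 ∨ i = 1 then -(fD2 M e Λ (p 1) / 2) - fD1 M e Λ (p 1) / p 1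
  else -(fD1 M e Λ (p 1) / p 1) + (1 - fRN M e Λ (p 1)) / p 1 ^ 2

lemma rho_val (M e Λ : ℝ) (p : Fin 4 → ℝ) :
    (rho M e Λ p 0 = -(fD2 M e Λ (p 1) / 2) - fD1 M e Λ (p 1) / p 1) ∧
    (rho M e Λ p 1 = -(fD2 M e Λ (p 1) / 2) - fD1 M e Λ (p 1) / p 1) ∧
    (rho M e Λ p 2 = -(fD1 M e Λ (p 1) / p 1) + (1 - fRN M e Λ (p 1)) / p 1 ^ 2) ∧
    (rho M e Λ p 3 = -(fD1 M e Λ (p 1) / p 1) + (1 - fRN M e Λ (p 1)) / p 1 ^ 2) := by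
  simp [rho]

lemma gMet_off (M e Λ : ℝ) (p : Fin 4 → ℝ) (i j : Fin 4) :
    gMet M e Λ p i j = if i = j then gMet M e Λ p i i else 0 := by
  by_cases h : i = j
  · subst h; simp
  · simp [gMet, h]

lemma RicT_eq {M e Λ : ℝ} {p : Fin 4 → ℝ} (hp : p ∈ RNdSDomain M e Λ) (i j : Fin 4) :
    RicT M e Λ p i j = if i = j then rho M e Λ p i * gMet M e Λ p i i else 0 := by
  have hr := hp.1.ne'
  have hf := hp.2.2.2
  have hs := sin_ne hp
  simp only [RicT, gInv, Riem_eq hp, Fin.sum_univ_four, dl]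
  revert i j
  refine fin4_cases ?_ ?_ ?_ ?_ <;> refine fin4_cases ?_ ?_ ?_ ?_ <;>
    simp only [RK_val, gUV_val, rho_val,
      Fin.reduceEq, if_true, if_false, zero_mul, mul_zero, sub_zero, add_zero, zero_add,
      zero_sub, sub_self, mul_one] <;>
    first
    | done
    | (field_simp; done)
    | (field_simp; ring1)

lemma scalC_eq {M e Λ : ℝ} {p : Fin 4 → ℝ} (hp : p ∈ RNdSDomain M e Λ) :
    scalC M e Λ p = -fD2 M e Λ (p 1) - 4 * (fD1 M e Λ (p 1) / p 1)
      + 2 * ((1 - fRN M e Λ (p 1)) / p 1 ^ 2) := by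
  have hr := hp.1.ne'
  have hf := hp.2.2.2
  have hs := sin_ne hp
  simp only [scalC, gInv, RicT_eq hp, Fin.sum_univ_four, rho_val, gUV_val,
      Fin.reduceEq, if_true, if_false, zero_mul, mul_zero, sub_zero, add_zero, zero_add]
  field_simp
  ring

/-- radial factor of the Weyl components C_{hiih} -/
noncomputable def wU (M e Λ : ℝ) (h i : Fin 4) (r : ℝ) : ℝ := match h, i with
  | 0, 1 => -2 * ((M * r - e^2) / r^4)
  | 1, 0 => -2 * ((M * r - e^2) / r^4)
  | 0, 2 => (M * r - e^2) / r^2 * fRN M e Λ r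
  | 2, 0 => (M * r - e^2) / r^2 * fRN M e Λ r
  | 0, 3 => (M * r - e^2) / r^2 * fRN M e Λ r
  | 3, 0 => (M * r - e^2) / r^2 * fRN M e Λ r
  | 1, 2 => -((M * r - e^2) / r^2 / fRN M e Λ r)
  | 2, 1 => -((M * r - e^2) / r^2 / fRN M e Λ r)
  | 1, 3 => -((M * r - e^2) / r^2 / fRN M e Λ r)
  | 3, 1 => -((M * r - e^2) / r^2 / fRN M e Λ r)
  | 2, 3 => 2 * (M * r - e^2)
  | 3, 2 => 2 * (M * r - e^2)
  | _, _ => 0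

/-- its derivative -/
noncomputable def wU' (M e Λ : ℝ) (h i : Fin 4) (r : ℝ) : ℝ := match h, i with
  | 0, 1 => -2 * (M / r^4 - 4 * (M * r - e^2) / r^5)
  | 1, 0 => -2 * (M / r^4 - 4 * (M * r - e^2) / r^5)
  | 0, 2 => (M / r^2 - 2 * (M * r - e^2) / r^3) * fRN M e Λ r
      + (M * r - e^2) / r^2 * fD1 M e Λ r
  | 2, 0 => (M / r^2 - 2 * (M * r - e^2) / r^3) * fRN M e Λ r
      + (M * r - e^2) / r^2 * fD1 M e Λ r
  | 0, 3 => (M / r^2 - 2 * (M * r - e^2) / r^3) * fRN M e Λ r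
      + (M * r - e^2) / r^2 * fD1 M e Λ r
  | 3, 0 => (M / r^2 - 2 * (M * r - e^2) / r^3) * fRN M e Λ r
      + (M * r - e^2) / r^2 * fD1 M e Λ r
  | 1, 2 => -(((M / r^2 - 2 * (M * r - e^2) / r^3) * fRN M e Λ r
      - (M * r - e^2) / r^2 * fD1 M e Λ r) / fRN M e Λ r ^ 2)
  | 2, 1 => -(((M / r^2 - 2 * (M * r - e^2) / r^3) * fRN M e Λ r
      - (M * r - e^2) / r^2 * fD1 M e Λ r) / fRN M e Λ r ^ 2)
  | 1, 3 => -(((M / r^2 - 2 * (M * r - e^2) / r^3) * fRN M e Λ r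
      - (M * r - e^2) / r^2 * fD1 M e Λ r) / fRN M e Λ r ^ 2)
  | 3, 1 => -(((M / r^2 - 2 * (M * r - e^2) / r^3) * fRN M e Λ r
      - (M * r - e^2) / r^2 * fD1 M e Λ r) / fRN M e Λ r ^ 2)
  | 2, 3 => 2 * M
  | 3, 2 => 2 * M
  | _, _ => 0

/-- angular factor of the Weyl components -/
noncomputable def wV (h i : Fin 4) (x : ℝ) : ℝ := match h, i with
  | 0, 1 => 1
  | 1, 0 => 1
  | 0, 2 => 1
  | 2, 0 => 1
  | 1, 2 => 1
  | 2, 1 => 1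
  | _, _ => sin x ^ 2

/-- its derivative -/
noncomputable def wV' (h i : Fin 4) (x : ℝ) : ℝ := match h, i with
  | 0, 1 => 0
  | 1, 0 => 0
  | 0, 2 => 0
  | 2, 0 => 0
  | 1, 2 => 0
  | 2, 1 => 0
  | _, _ => 2 * sin x * cos x

lemma wU_deriv (M e Λ r : ℝ) (hr : r ≠ 0) (hf : fRN M e Λ r ≠ 0) (h i : Fin 4) :
    HasDerivAt (wU M e Λ h i) (wU' M e Λ h i r) r := by
  have h0 := hasDerivAt_fRN M e Λ r hr
  have hz : HasDerivAt (fun _ : ℝ => (0:ℝ)) 0 r := hasDerivAt_const r 0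
  have hm : HasDerivAt (fun x : ℝ => M * x - e^2) M r := by
    refine (((hasDerivAt_id r).const_mul M).sub_const (e^2)).congr_deriv ?_
    simp
  have h4 : HasDerivAt (fun x : ℝ => (M * x - e^2) / x^4)
      (M / r^4 - 4 * (M * r - e^2) / r^5) r := by
    refine (hm.div (hasDerivAt_pow 4 r) (pow_ne_zero 4 hr)).congr_deriv ?_
    push_cast
    field_simp
  have h2 : HasDerivAt (fun x : ℝ => (M * x - e^2) / x^2)
      (M / r^2 - 2 * (M * r - e^2) / r^3) r := by
    refine (hm.div (hasDerivAt_pow 2 r) (pow_ne_zero 2 hr)).congr_deriv ?_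
    push_cast
    field_simp
  revert h i
  refine fin4_cases ?_ ?_ ?_ ?_ <;> refine fin4_cases ?_ ?_ ?_ ?_ <;> first
    | exact hz | exact hm.const_mul 2 | exact h4.const_mul (-2) | exact h2.mul h0
    | exact (h2.div h0 hf).neg

lemma wV_deriv (x : ℝ) (h i : Fin 4) :
    HasDerivAt (wV h i) (wV' h i x) x := by
  have ho : HasDerivAt (fun _ : ℝ => (1:ℝ)) 0 x := hasDerivAt_const x 1
  revert h i
  refine fin4_cases ?_ ?_ ?_ ?_ <;> refine fin4_cases ?_ ?_ ?_ ?_ <;> first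
    | exact ho | exact sin_sq_deriv x

lemma wU_val (M e Λ r : ℝ) :
    (wU M e Λ 0 1 r = -2 * ((M * r - e^2) / r^4)) ∧
    (wU M e Λ 0 2 r = (M * r - e^2) / r^2 * fRN M e Λ r) ∧
    (wU M e Λ 0 3 r = (M * r - e^2) / r^2 * fRN M e Λ r) ∧
    (wU M e Λ 1 0 r = -2 * ((M * r - e^2) / r^4)) ∧
    (wU M e Λ 1 2 r = -((M * r - e^2) / r^2 / fRN M e Λ r)) ∧
    (wU M e Λ 1 3 r = -((M * r - e^2) / r^2 / fRN M e Λ r)) ∧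
    (wU M e Λ 2 0 r = (M * r - e^2) / r^2 * fRN M e Λ r) ∧
    (wU M e Λ 2 1 r = -((M * r - e^2) / r^2 / fRN M e Λ r)) ∧
    (wU M e Λ 2 3 r = 2 * (M * r - e^2)) ∧
    (wU M e Λ 3 0 r = (M * r - e^2) / r^2 * fRN M e Λ r) ∧
    (wU M e Λ 3 1 r = -((M * r - e^2) / r^2 / fRN M e Λ r)) ∧
    (wU M e Λ 3 2 r = 2 * (M * r - e^2)) ∧
    (∀ i, wU M e Λ i i r = 0) := by
  repeat' apply And.intro
  all_goals first
    | rfl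
    | exact fin4_cases rfl rfl rfl rfl

lemma wU'_val (M e Λ r : ℝ) :
    (wU' M e Λ 0 1 r = -2 * (M / r^4 - 4 * (M * r - e^2) / r^5)) ∧
    (wU' M e Λ 0 2 r = (M / r^2 - 2 * (M * r - e^2) / r^3) * fRN M e Λ r
      + (M * r - e^2) / r^2 * fD1 M e Λ r) ∧
    (wU' M e Λ 0 3 r = (M / r^2 - 2 * (M * r - e^2) / r^3) * fRN M e Λ r
      + (M * r - e^2) / r^2 * fD1 M e Λ r) ∧
    (wU' M e Λ 1 0 r = -2 * (M / r^4 - 4 * (M * r - e^2) / r^5)) ∧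
    (wU' M e Λ 1 2 r = -(((M / r^2 - 2 * (M * r - e^2) / r^3) * fRN M e Λ r
      - (M * r - e^2) / r^2 * fD1 M e Λ r) / fRN M e Λ r ^ 2)) ∧
    (wU' M e Λ 1 3 r = -(((M / r^2 - 2 * (M * r - e^2) / r^3) * fRN M e Λ r
      - (M * r - e^2) / r^2 * fD1 M e Λ r) / fRN M e Λ r ^ 2)) ∧
    (wU' M e Λ 2 0 r = (M / r^2 - 2 * (M * r - e^2) / r^3) * fRN M e Λ r
      + (M * r - e^2) / r^2 * fD1 M e Λ r) ∧
    (wU' M e Λ 2 1 r = -(((M / r^2 - 2 * (M * r - e^2) / r^3) * fRN M e Λ r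
      - (M * r - e^2) / r^2 * fD1 M e Λ r) / fRN M e Λ r ^ 2)) ∧
    (wU' M e Λ 2 3 r = 2 * M) ∧
    (wU' M e Λ 3 0 r = (M / r^2 - 2 * (M * r - e^2) / r^3) * fRN M e Λ r
      + (M * r - e^2) / r^2 * fD1 M e Λ r) ∧
    (wU' M e Λ 3 1 r = -(((M / r^2 - 2 * (M * r - e^2) / r^3) * fRN M e Λ r
      - (M * r - e^2) / r^2 * fD1 M e Λ r) / fRN M e Λ r ^ 2)) ∧
    (wU' M e Λ 3 2 r = 2 * M) ∧
    (∀ i, wU' M e Λ i i r = 0) := by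
  repeat' apply And.intro
  all_goals first
    | rfl
    | exact fin4_cases rfl rfl rfl rfl

lemma wV_val (x : ℝ) :
    (wV 0 1 x = 1) ∧
    (wV 0 2 x = 1) ∧
    (wV 0 3 x = sin x ^ 2) ∧
    (wV 1 0 x = 1) ∧
    (wV 1 2 x = 1) ∧
    (wV 1 3 x = sin x ^ 2) ∧
    (wV 2 0 x = 1) ∧
    (wV 2 1 x = 1) ∧
    (wV 2 3 x = sin x ^ 2) ∧
    (wV 3 0 x = sin x ^ 2) ∧
    (wV 3 1 x = sin x ^ 2) ∧
    (wV 3 2 x = sin x ^ 2) := by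
  repeat' apply And.intro
  all_goals rfl

lemma wV'_val (x : ℝ) :
    (wV' 0 1 x = 0) ∧
    (wV' 0 2 x = 0) ∧
    (wV' 0 3 x = 2 * sin x * cos x) ∧
    (wV' 1 0 x = 0) ∧
    (wV' 1 2 x = 0) ∧
    (wV' 1 3 x = 2 * sin x * cos x) ∧
    (wV' 2 0 x = 0) ∧
    (wV' 2 1 x = 0) ∧
    (wV' 2 3 x = 2 * sin x * cos x) ∧
    (wV' 3 0 x = 2 * sin x * cos x) ∧
    (wV' 3 1 x = 2 * sin x * cos x) ∧
    (wV' 3 2 x = 2 * sin x * cos x) := by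
  repeat' apply And.intro
  all_goals rfl

lemma key_rel (M e Λ r : ℝ) (hr : r ≠ 0) :
    fD2 M e Λ r = 2 * (fD1 M e Λ r / r) + 2 * ((1 - fRN M e Λ r) / r ^ 2)
      - 12 * ((M * r - e^2) / r^4) := by
  simp only [fD1, fD2, fRN]
  field_simp
  ring

set_option maxHeartbeats 4000000 in
lemma confC_eq {M e Λ : ℝ} {p : Fin 4 → ℝ} (hp : p ∈ RNdSDomain M e Λ) (h i j k : Fin 4) :
    confC M e Λ p h i j k = wU M e Λ h i (p 1) * wV h i (p 2) * dl h i j k := by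
  have hr := hp.1.ne'
  have hf := hp.2.2.2
  have hs := sin_ne hp
  have hk := key_rel M e Λ (p 1) hr
  simp only [confC, KN, Riem_eq hp, RicT_eq hp, scalC_eq hp, dl]
  revert h i j k
  refine fin4_cases ?_ ?_ ?_ ?_ <;> refine fin4_cases ?_ ?_ ?_ ?_ <;>
    refine fin4_cases ?_ ?_ ?_ ?_ <;> refine fin4_cases ?_ ?_ ?_ ?_ <;>
    simp only [gMet_off M e Λ p 0 1, gMet_off M e Λ p 0 2, gMet_off M e Λ p 0 3,
      gMet_off M e Λ p 1 0, gMet_off M e Λ p 1 2, gMet_off M e Λ p 1 3,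
      gMet_off M e Λ p 2 0, gMet_off M e Λ p 2 1, gMet_off M e Λ p 2 3,
      gMet_off M e Λ p 3 0, gMet_off M e Λ p 3 1, gMet_off M e Λ p 3 2,
      RK_val, gUV_val, rho_val, wU_val, wV_val, hk,
      Fin.reduceEq, if_true, if_false, zero_mul, mul_zero, sub_zero, add_zero, zero_add,
      zero_sub, sub_self, mul_one] <;>
    first
    | done
    | ring1
    | (field_simp; ring1)

lemma pd_confC {M e Λ : ℝ} {p : Fin 4 → ℝ} (hp : p ∈ RNdSDomain M e Λ) (a h i j k : Fin 4) :
    pd a (fun q => confC M e Λ q h i j k) p =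
      (if a = 1 then wU' M e Λ h i (p 1) * wV h i (p 2) else
      if a = 2 then wU M e Λ h i (p 1) * wV' h i (p 2) else 0) * dl h i j k := by
  rw [pd_prod a _ p (wU M e Λ h i) (fun x => wV h i x * dl h i j k) _ _
    ((dom_open M e Λ p hp).mono fun q hq => (confC_eq hq h i j k).trans (mul_assoc _ _ _))
    (wU_deriv M e Λ (p 1) hp.1.ne' hp.2.2.2 h i) ((wV_deriv (p 2) h i).mul_const _)]
  split_ifs <;> ring

lemma dl_swap (h i j k : Fin 4) : dl i h j k = -dl h i j k := by
  simp only [dl]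
  split_ifs <;> simp_all

lemma wU_symm (M e Λ : ℝ) (h i : Fin 4) : wU M e Λ h i = wU M e Λ i h := by
  revert h i
  refine fin4_cases ?_ ?_ ?_ ?_ <;> refine fin4_cases ?_ ?_ ?_ ?_ <;> rfl

lemma wV_symm (h i : Fin 4) : wV h i = wV i h := by
  revert h i
  refine fin4_cases ?_ ?_ ?_ ?_ <;> refine fin4_cases ?_ ?_ ?_ ?_ <;> rfl

lemma confC_anti {M e Λ : ℝ} {p : Fin 4 → ℝ} (hp : p ∈ RNdSDomain M e Λ) (h i j k : Fin 4) :
    confC M e Λ p i h j k = -confC M e Λ p h i j k := by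
  rw [confC_eq hp, confC_eq hp, dl_swap h i, wU_symm M e Λ i h, wV_symm i h]
  ring

lemma covD4_anti {M e Λ : ℝ} {p : Fin 4 → ℝ} (hp : p ∈ RNdSDomain M e Λ) (a h i j k : Fin 4) :
    covD4 M e Λ (confC M e Λ) a p i h j k = -covD4 M e Λ (confC M e Λ) a p h i j k := by
  have h1 : pd a (fun q => confC M e Λ q i h j k) p = -pd a (fun q => confC M e Λ q h i j k) p := by
    have : (fun q => confC M e Λ q i h j k) =ᶠ[𝓝 p] fun q => -confC M e Λ q h i j k :=
      (dom_open M e Λ p hp).mono fun q hq => confC_anti hq h i j k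
    simp only [pd]
    rw [this.fderiv_eq, fderiv_fun_neg]
    rfl
  simp only [covD4, h1, Fin.sum_univ_four]
  rw [confC_anti hp h 0, confC_anti hp h 1, confC_anti hp h 2, confC_anti hp h 3,
    confC_anti hp 0 i, confC_anti hp 1 i, confC_anti hp 2 i, confC_anti hp 3 i,
    confC_anti hp h i j 0, confC_anti hp h i j 1, confC_anti hp h i j 2, confC_anti hp h i j 3,
    confC_anti hp h i 0 k, confC_anti hp h i 1 k, confC_anti hp h i 2 k, confC_anti hp h i 3 k]
  ring

lemma alt3 (X : Fin 4 → Fin 4 → Fin 4 → ℝ) (hc : ∀ a b c, X a b c = X b c a)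
    (hs : ∀ a b c, X b a c = -X a b c)
    (h012 : X 0 1 2 = 0) (h013 : X 0 1 3 = 0) (h023 : X 0 2 3 = 0) (h123 : X 1 2 3 = 0) :
    ∀ a b c, X a b c = 0 := by
  have hd : ∀ a c, X a a c = 0 := fun a c => by linarith [hs a a c]
  have hd2 : ∀ a c, X a c a = 0 := fun a c => by rw [← hc]; exact hd a c
  have hd3 : ∀ a c, X c a a = 0 := fun a c => by rw [hc]; exact hd a c
  have key : ∀ a b c, X a b c = 0 → X b c a = 0 ∧ X c a b = 0 ∧ X b a c = 0 ∧ X a c b = 0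
      ∧ X c b a = 0 := by
    intro a b c h
    have h1 := hc a b c
    have h2 := hc b c a
    have h3 := hs a b c
    have h4 := hs b c a
    have h5 := hs c a b
    refine ⟨?_, ?_, ?_, ?_, ?_⟩ <;> linarith
  have k1 := key _ _ _ h012
  have k2 := key _ _ _ h013
  have k3 := key _ _ _ h023
  have k4 := key _ _ _ h123
  refine fin4_cases ?_ ?_ ?_ ?_ <;> refine fin4_cases ?_ ?_ ?_ ?_ <;>
    refine fin4_cases ?_ ?_ ?_ ?_ <;> simp only [hd, hd2, hd3, h012, h013, h023, h123, k1, k2, k3, k4]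

/-- the recurrence 1-form -/
noncomputable def sg (M e : ℝ) (a : Fin 4) (p : Fin 4 → ℝ) : ℝ :=
  if a = 1 then e^2 / (p 1 * (M * p 1 - e^2)) else 0

/-- the difference of the two sides -/
noncomputable def XX (M e Λ : ℝ) (p : Fin 4 → ℝ) (d e' a b c : Fin 4) : ℝ :=
        covD4 M e Λ (confC M e Λ) a p b c d e'
          + covD4 M e Λ (confC M e Λ) b p c a d e'
          + covD4 M e Λ (confC M e Λ) c p a b d e' -
        (sg M e a p * confC M e Λ p b c d e'
          + sg M e b p * confC M e Λ p c a d e'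
          + sg M e c p * confC M e Λ p a b d e')

set_option maxHeartbeats 4000000 in
lemma XX_base {M e Λ : ℝ} {p : Fin 4 → ℝ} (hp : p ∈ RNdSDomain M e Λ) (hM : M * p 1 ≠ e^2)
    (d e' : Fin 4) : XX M e Λ p d e' 0 1 2 = 0 ∧ XX M e Λ p d e' 0 1 3 = 0 ∧
      XX M e Λ p d e' 0 2 3 = 0 ∧ XX M e Λ p d e' 1 2 3 = 0 := by
  have hr := hp.1.ne'
  have hf := hp.2.2.2
  have hs := sin_ne hp
  have hw : M * p 1 - e^2 ≠ 0 := sub_ne_zero.2 hM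
  revert d e'
  refine fin4_cases ?_ ?_ ?_ ?_ <;> refine fin4_cases ?_ ?_ ?_ ?_ <;>
    refine ⟨?_, ?_, ?_, ?_⟩ <;>
    simp only [XX, sg, covD4, Fin.sum_univ_four, pd_confC hp, Chr_eq hp, confC_eq hp, dl,
      cU_zero, cU_val, cV_val, wU_val, wV_val, wU'_val, wV'_val,
      Fin.reduceEq, if_true, if_false, zero_mul, mul_zero, sub_zero, add_zero, zero_add,
      zero_sub, sub_self, mul_one] <;>
    first
    | done
    | ring1
    | (field_simp; ring1)

end Helpers

/-- assuming Mr ≠ e² on U, the conformal 2-forms of the RNdS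
spacetime are recurrent. -/
theorem rnds_conformal_two_forms_recurrent (M e Λ : ℝ) (U : Set (Fin 4 → ℝ))
    (hU : U.Nonempty) (hconn : IsConnected U) (hopen : IsOpen U)
    (hsub : U ⊆ RNdSDomain M e Λ)
    (hMr : ∀ p ∈ U, M * p 1 ≠ e^2) :
    ∃ σ : Fin 4 → (Fin 4 → ℝ) → ℝ,
      (∀ a : Fin 4, ContDiffOn ℝ (⊤ : ℕ∞) (σ a) U) ∧
      ∀ p ∈ U, ∀ a b c d e' : Fin 4,
        covD4 M e Λ (confC M e Λ) a p b c d e'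
          + covD4 M e Λ (confC M e Λ) b p c a d e'
          + covD4 M e Λ (confC M e Λ) c p a b d e' =
        σ a p * confC M e Λ p b c d e'
          + σ b p * confC M e Λ p c a d e'
          + σ c p * confC M e Λ p a b d e' := by
  refine ⟨sg M e, ?_, ?_⟩
  · intro a
    by_cases ha : a = 1
    · have h1 : sg M e a = fun p => e^2 / (p 1 * (M * p 1 - e^2)) := by
        funext p
        simp [sg, ha]
      rw [h1]
      have hp1 : ContDiff ℝ (⊤ : ℕ∞) (fun p : Fin 4 → ℝ => p 1) := contDiff_apply ℝ ℝ 1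
      refine ContDiffOn.div contDiffOn_const
        (hp1.mul ((contDiff_const.mul hp1).sub contDiff_const)).contDiffOn ?_
      intro p hp
      exact mul_ne_zero (hsub hp).1.ne' (sub_ne_zero.2 (hMr p hp))
    · have h1 : sg M e a = fun _ => 0 := by
        funext p
        simp [sg, ha]
      rw [h1]
      exact contDiffOn_const
  · intro p hpU a b c d e'
    have hp := hsub hpU
    obtain ⟨b1, b2, b3, b4⟩ := XX_base hp (hMr p hpU) d e'
    have hX := alt3 (XX M e Λ p d e') (fun a b c => by simp only [XX]; ring)
      (fun a b c => by
        simp only [XX]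
        rw [covD4_anti hp b c a, covD4_anti hp a b c, covD4_anti hp c a b,
          confC_anti hp c a, confC_anti hp b c, confC_anti hp a b]
        ring) b1 b2 b3 b4 a b c
    exact sub_eq_zero.1 hX
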